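/- Let n ≥ 5 be an odd integer and suppose there exists a ∈ F_{2^n} with a ∉ {0, 1}, a^3 + a^2 + 1 ≠ 0, Tr(a^2/(a^2+a+1)) = 0 and Tr(a^4/(a+1)^5) = 0. Let G : F_{2^n} → F_{2^n} be given by G(x) = x^{2^n−2} + x^2. Then there exists c ∈ F_{2^n} with c ≠ 1 (for example c = 1 + s^{−1}, where s is the unique element of F_{2^n} with s^2 = a^3 + a^2 + 1) such that the c-differential uniformity of G satisfies δ_{G,c} = 5. -/

import Mathlib

open Finset

/-- The `(c,a,b)` entry of the `c`-Difference Distribution Table of `G`: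
the number of `x` with `G (x + a) - c * G x = b`. -/
def cddt {F : Type*} [Field F] [Fintype F] [DecidableEq F]
    (G : F → F) (c a b : F) : ℕ :=
  (Finset.univ.filter fun x : F => G (x + a) - c * G x = b).card

/-- The `c`-differential uniformity of `G`: the maximum entry of the `c`-DDT,
where `a ≠ 0` is required only when `c = 1`. -/
def cdu {F : Type*} [Field F] [Fintype F] [DecidableEq F]
    (G : F → F) (c : F) : ℕ :=
  ((Finset.univ : Finset (F × F)).filter fun p => c = 1 → p.1 ≠ 0).sup
    fun p => cddt G c p.1 p.2

/-- The absolute trace of F_{2^n}, Tr x = x + x^2 + x^4 + ... + x^(2^(n-1)),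
viewed as an element of the field (its values lie in the prime subfield). -/
def Tr {F : Type*} [Field F] (n : ℕ) (x : F) : F :=
  ∑ i ∈ Finset.range n, x ^ 2 ^ i

/-!
Write `a = r ^ 2` and `s = r ^ 3 + r ^ 2 + 1`. Clearing denominators in `G (x + α) - c * G x = b`
gives a polynomial of degree four, and only the solutions `x = 0` and `x = α` can fail to be among
its roots. If both endpoints are solutions, then `α = 0` or `α ^ 3 = 1` and `b = 0`; in the latter
case the quartic is divisible by the square of a linear factor, so it has at most three roots, and
there are at most five solutions in every case. For `c = 1 + s⁻¹`, `α = a` and `b = G a` the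
endpoint `x = 0` is a solution, and the quartic splits into two coprime quadratics whose
Artin–Schreier classes are `a ^ 2 / (a ^ 2 + a + 1)` and the square root of `a ^ 4 / (a + 1) ^ 5`;
by the trace conditions and additive Hilbert 90 each has two roots.
-/

theorem cddt_le_cdu {F : Type*} [Field F] [Fintype F] [DecidableEq F] (G : F → F) {c a : F}
    (h : c = 1 → a ≠ 0) (b : F) : cddt G c a b ≤ cdu G c :=
  le_sup (f := fun p : F × F ↦ cddt G c p.1 p.2) (b := (a, b))
    (mem_filter.mpr ⟨mem_univ _, h⟩)

section AdditiveHilbertNinety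

variable {K L : Type*} [Field K] [Field L] [Algebra K L] [FiniteDimensional K L] [IsGalois K L]

theorem finrank_ker_sub_id_le_one {σ : Gal(L/K)} (hσ : ∀ τ, τ ∈ Subgroup.zpowers σ) :
    Module.finrank K (σ.toLinearMap - LinearMap.id).ker ≤ 1 := by
  have ker_le : (σ.toLinearMap - LinearMap.id).ker ≤ Submodule.span K {1} := by
    intro x hx
    have hfix : σ ∈ MulAction.stabilizer Gal(L/K) x := sub_eq_zero.mp hx
    obtain ⟨y, rfl⟩ := (IsGalois.mem_range_algebraMap_iff_fixed x).mpr fun τ ↦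
      Subgroup.zpowers_le.mpr hfix (hσ τ)
    exact Submodule.mem_span_singleton.mpr ⟨y, (Algebra.algebraMap_eq_smul_one y).symm⟩
  exact (Submodule.finrank_mono ker_le).trans (finrank_span_singleton one_ne_zero).le

theorem trace_eq_zero_iff_exists_apply_sub_self_eq {σ : Gal(L/K)}
    (hσ : ∀ τ, τ ∈ Subgroup.zpowers σ) (v : L) :
    Algebra.trace K L v = 0 ↔ ∃ u, σ u - u = v := by
  have range_le : (σ.toLinearMap - LinearMap.id).range ≤ (Algebra.trace K L).ker := by
    rintro _ ⟨u, rfl⟩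
    simp [Algebra.trace_eq_of_algEquiv σ u]
  have finrank_le : Module.finrank K (Algebra.trace K L).ker ≤
      Module.finrank K (σ.toLinearMap - LinearMap.id).range := by
    have hker := finrank_ker_sub_id_le_one hσ
    have hrank := (σ.toLinearMap - LinearMap.id).finrank_range_add_finrank_ker
    have htrace := Module.Dual.finrank_ker_add_one_of_ne_zero (Algebra.trace_ne_zero K L)
    lia
  change v ∈ (Algebra.trace K L).ker ↔ v ∈ (σ.toLinearMap - LinearMap.id).range
  rw [Submodule.eq_of_le_of_finrank_le range_le finrank_le]

end AdditiveHilbertNinety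

theorem mem_zpowers_frobeniusAlgEquivOfAlgebraic (K L : Type*) [Field K] [Fintype K] [Field L]
    [Finite L] [Algebra K L] (τ : Gal(L/K)) :
    τ ∈ Subgroup.zpowers (FiniteField.frobeniusAlgEquivOfAlgebraic K L) :=
  have ⟨_, hi⟩ := (FiniteField.bijective_frobeniusAlgEquivOfAlgebraic_pow K L).surjective τ
  hi ▸ Subgroup.npow_mem_zpowers _ _

theorem pow_card_sub_two_eq_inv {K : Type*} [Field K] [Fintype K] (hK : 2 < Fintype.card K)
    (x : K) : x ^ (Fintype.card K - 2) = x⁻¹ := by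
  obtain rfl | hx := eq_or_ne x 0
  · rw [zero_pow (by lia), inv_zero]
  · refine eq_inv_of_mul_eq_one_left ?_
    rw [← pow_succ, ← FiniteField.pow_card_sub_one_eq_one x hx]
    congr 1
    lia

section Trace

variable {F : Type*} [Field F]

theorem Tr_sq [CharP F 2] (n : ℕ) (x : F) : Tr n (x ^ 2) = Tr n x ^ 2 := by
  simp only [Tr, CharTwo.sum_sq, pow_right_comm]

variable [Fintype F] {n : ℕ}

theorem algebraMap_trace_eq_Tr [Algebra (ZMod 2) F] (hF : Fintype.card F = 2 ^ n) (x : F) :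
    algebraMap (ZMod 2) F (Algebra.trace (ZMod 2) F x) = Tr n x := by
  have hn : Module.finrank (ZMod 2) F = n := by
    refine Nat.pow_right_injective le_rfl ?_
    simpa [hF] using (Module.card_eq_pow_finrank (K := ZMod 2) (V := F)).symm
  rw [FiniteField.algebraMap_trace_eq_sum_pow, hn, Nat.card_zmod, Tr]

theorem Tr_eq_zero_iff_exists_sq_add_self_eq (hF : Fintype.card F = 2 ^ n) (v : F) :
    Tr n v = 0 ↔ ∃ u, u ^ 2 + u = v := by
  have : CharP F 2 := charP_of_card_eq_prime_pow hF
  let : Algebra (ZMod 2) F := ZMod.algebra F 2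
  rw [← algebraMap_trace_eq_Tr hF, map_eq_zero, trace_eq_zero_iff_exists_apply_sub_self_eq
    (mem_zpowers_frobeniusAlgEquivOfAlgebraic (ZMod 2) F)]
  simp only [FiniteField.coe_frobeniusAlgEquivOfAlgebraic, ZMod.card, CharTwo.sub_eq_add]

theorem sq_add_self_add_one_ne_zero_of_odd (hF : Fintype.card F = 2 ^ n) (hn : Odd n) (x : F) :
    x ^ 2 + x + 1 ≠ 0 := by
  have : CharP F 2 := charP_of_card_eq_prime_pow hF
  intro hx
  have hTr : Tr n (1 : F) = 0 :=
    (Tr_eq_zero_iff_exists_sq_add_self_eq hF 1).mpr ⟨x, CharTwo.add_eq_zero.mp hx⟩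
  simp [Tr, CharTwo.natCast_eq_ite, Nat.not_even_iff_odd.mpr hn] at hTr

theorem one_lt_card_quadratic_roots [DecidableEq F] (hF : Fintype.card F = 2 ^ n) {p q r : F}
    (hp : p ≠ 0) (hq : q ≠ 0) (hTr : Tr n (p * r / q ^ 2) = 0) :
    1 < #{x : F | p * x ^ 2 + q * x + r = 0} := by
  have : CharP F 2 := charP_of_card_eq_prime_pow hF
  have two_eq_zero : (2 : F) = 0 := CharTwo.two_eq_zero
  obtain ⟨w, hw⟩ := (Tr_eq_zero_iff_exists_sq_add_self_eq hF _).mp hTr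
  have root_of_artinSchreier : ∀ u : F, u ^ 2 + u = p * r / q ^ 2 →
      p * (q / p * u) ^ 2 + q * (q / p * u) + r = 0 := by
    intro u hu
    have : p * (q / p * u) ^ 2 + q * (q / p * u) = r := by
      calc p * (q / p * u) ^ 2 + q * (q / p * u) = q ^ 2 / p * (u ^ 2 + u) := by field_simp
        _ = r := by rw [hu]; field_simp
    rw [this, CharTwo.add_self_eq_zero]
  refine one_lt_card.mpr ⟨q / p * w, ?_, q / p * (w + 1), ?_, ?_⟩
  · simpa using root_of_artinSchreier w hw
  · simpa using root_of_artinSchreier (w + 1) (by linear_combination hw + (w + 1) * two_eq_zero)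
  · simp [hp, hq]

end Trace

section Quartic

open Polynomial

variable {F : Type*} [Field F]

/-- The equation `G (x + α) - c * G x = b` for `G x = x⁻¹ + x ^ 2`, multiplied by `x * (x + α)`.
Its roots are the solutions counted by `cddt G c α b`, except possibly at `0` and `-α`, where
`0⁻¹ = 0` enters the equation. -/
noncomputable def ddtQuartic (c α b : F) : F[X] :=
  X + X * (X + C α) ^ 3 - C c * (X + C α) - C c * X ^ 3 * (X + C α) - C b * X * (X + C α)

theorem eval_ddtQuartic (c α b x : F) : (ddtQuartic c α b).eval x =
    x + x * (x + α) ^ 3 - c * (x + α) - c * x ^ 3 * (x + α) - b * x * (x + α) := by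
  simp [ddtQuartic]

theorem natDegree_ddtQuartic {c : F} (hc : c ≠ 1) (α b : F) :
    (ddtQuartic c α b).natDegree = 4 := by
  unfold ddtQuartic
  compute_degree!
  exact sub_ne_zero.mpr hc.symm

theorem ddtQuartic_ne_zero {c : F} (hc : c ≠ 1) (α b : F) : ddtQuartic c α b ≠ 0 :=
  ne_zero_of_natDegree_gt (n := 3) (by rw [natDegree_ddtQuartic hc]; norm_num)

theorem isRoot_ddtQuartic_iff {c α b x : F} (hx : x ≠ 0) (hxα : x + α ≠ 0) :
    (ddtQuartic c α b).IsRoot x ↔ (x + α)⁻¹ + (x + α) ^ 2 - c * (x⁻¹ + x ^ 2) = b := by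
  have clear_denominators : (ddtQuartic c α b).eval x =
      x * (x + α) * ((x + α)⁻¹ + (x + α) ^ 2 - c * (x⁻¹ + x ^ 2) - b) := by
    rw [eval_ddtQuartic]
    field_simp
    ring
  rw [IsRoot, clear_denominators, mul_eq_zero, or_iff_right (mul_ne_zero hx hxα), sub_eq_zero]

theorem ne_zero_of_isRoot_ddtQuartic {c α b x : F} (hc : c ≠ 0) (hα : α ≠ 0)
    (hx : (ddtQuartic c α b).IsRoot x) : x ≠ 0 := by
  rintro rfl
  simp [eval_ddtQuartic, hc, hα] at hx

theorem add_ne_zero_of_isRoot_ddtQuartic {c α b x : F} (hα : α ≠ 0)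
    (hx : (ddtQuartic c α b).IsRoot x) : x + α ≠ 0 := by
  intro hxα
  have hx0 : x = 0 := by simpa [eval_ddtQuartic, hxα] using hx
  exact hα (by simpa [hx0] using hxα)

theorem ddtQuartic_eq_mul_sq [CharP F 2] {α : F} (hα : α ^ 3 = 1) (d : F) :
    ddtQuartic (d ^ 2) α 0 =
      (X ^ 2 + C α * X + C (α ^ 2)) * (C (1 + d) * X + C (d * α)) ^ 2 := by
  have hα' : C α ^ 3 = 1 := by rw [← C_pow, hα, C_1]
  simp only [ddtQuartic, map_add, map_mul, map_pow, C_0, C_1]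
  grind

variable [DecidableEq F]

theorem card_roots_ddtQuartic_le_four {c : F} (hc : c ≠ 1) (α b : F) :
    #(ddtQuartic c α b).roots.toFinset ≤ 4 :=
  (Multiset.toFinset_card_le _).trans ((card_roots' _).trans (natDegree_ddtQuartic hc α b).le)

theorem card_roots_ddtQuartic_le_three [CharP F 2] [PerfectRing F 2] {c α : F} (hc : c ≠ 1)
    (hα : α ^ 3 = 1) :
    #(ddtQuartic c α 0).roots.toFinset ≤ 3 := by
  obtain ⟨d, rfl⟩ : ∃ d, d ^ 2 = c := surjective_frobenius F 2 c
  have hd : 1 + d ≠ 0 := by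
    intro h
    exact hc (by rw [← CharTwo.add_eq_zero.mp h, one_pow])
  let P : F[X] := (X ^ 2 + C α * X + C (α ^ 2)) * (C (1 + d) * X + C (d * α))
  have hP : P.natDegree = 3 := by
    unfold P
    compute_degree!
  have hP0 : P ≠ 0 := ne_zero_of_natDegree_gt (n := 2) (by rw [hP]; norm_num)
  have roots_subset : (ddtQuartic (d ^ 2) α 0).roots.toFinset ⊆ P.roots.toFinset := by
    intro x hx
    rw [ddtQuartic_eq_mul_sq hα] at hx
    simp_all [P]
  calc #(ddtQuartic (d ^ 2) α 0).roots.toFinset ≤ #P.roots.toFinset := card_le_card roots_subset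
    _ ≤ P.roots.card := Multiset.toFinset_card_le _
    _ ≤ 3 := hP ▸ card_roots' P

theorem pow_three_eq_one_and_eq_zero_of_one_lt_card_endpoints [CharP F 2] {c α b : F}
    (hc : c ≠ 1)
    (hcard : 1 < #{x ∈ {0, -α} | (x + α)⁻¹ + (x + α) ^ 2 - c * (x⁻¹ + x ^ 2) = b}) :
    α ^ 3 = 1 ∧ b = 0 := by
  have hα : α ≠ 0 := by
    rintro rfl
    exact absurd (hcard.trans_le (card_filter_le _ _)) (by simp)
  have hsol := filter_eq_self.mp (eq_of_subset_of_card_le (filter_subset _ {0, -α})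
    (card_le_two.trans hcard))
  have hsol_zero : α⁻¹ + α ^ 2 = b := by simpa using hsol 0 (by simp)
  have hsol_α : c * (α⁻¹ + α ^ 2) = b := by
    simpa [CharTwo.neg_eq, CharTwo.add_self_eq_zero] using hsol (-α) (by simp)
  have hb : b = 0 := by
    have hmul : (1 - c) * b = 0 := by linear_combination c * hsol_zero - hsol_α
    exact (mul_eq_zero.mp hmul).resolve_left (sub_ne_zero.mpr hc.symm)
  refine ⟨?_, hb⟩
  rw [hb, CharTwo.add_eq_zero] at hsol_zero
  rw [pow_succ, ← hsol_zero, inv_mul_cancel₀ hα]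

variable [Fintype F]

theorem cddt_inv_add_sq_le {c : F} (hc : c ≠ 1) (α b : F) :
    cddt (fun x ↦ x⁻¹ + x ^ 2) c α b ≤ #{x ∈ {0, -α} |
      (x + α)⁻¹ + (x + α) ^ 2 - c * (x⁻¹ + x ^ 2) = b} + #(ddtQuartic c α b).roots.toFinset := by
  refine (card_le_card fun x hx ↦ ?_).trans (card_union_le _ _)
  have hsol := (mem_filter.mp hx).2
  by_cases hendpoint : x = 0 ∨ x = -α
  · exact mem_union_left _ (by simp [hendpoint, hsol])
  · rw [not_or, ← add_eq_zero_iff_eq_neg] at hendpoint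
    exact mem_union_right _ (Multiset.mem_toFinset.mpr ((mem_roots (ddtQuartic_ne_zero hc α b)).mpr
      ((isRoot_ddtQuartic_iff hendpoint.1 hendpoint.2).mpr hsol)))

theorem cddt_inv_add_sq_le_five [CharP F 2] {c : F} (hc : c ≠ 1) (α b : F) :
    cddt (fun x ↦ x⁻¹ + x ^ 2) c α b ≤ 5 := by
  refine (cddt_inv_add_sq_le hc α b).trans ?_
  obtain hle | hlt := le_or_gt
    #{x ∈ {0, -α} | (x + α)⁻¹ + (x + α) ^ 2 - c * (x⁻¹ + x ^ 2) = b} 1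
  · exact add_le_add hle (card_roots_ddtQuartic_le_four hc α b)
  · obtain ⟨hα, rfl⟩ := pow_three_eq_one_and_eq_zero_of_one_lt_card_endpoints hc hlt
    exact add_le_add ((card_filter_le _ _).trans card_le_two)
      (card_roots_ddtQuartic_le_three hc hα)

theorem card_roots_ddtQuartic_lt_cddt {c α : F} (hc0 : c ≠ 0) (hα : α ≠ 0) :
    #(ddtQuartic c α (α⁻¹ + α ^ 2)).roots.toFinset <
      cddt (fun x ↦ x⁻¹ + x ^ 2) c α (α⁻¹ + α ^ 2) := by
  refine card_lt_card ((ssubset_iff_of_subset fun x hx ↦ ?_).mpr ⟨0, ?_, ?_⟩)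
  · have hroot := isRoot_of_mem_roots (Multiset.mem_toFinset.mp hx)
    have hx0 := ne_zero_of_isRoot_ddtQuartic hc0 hα hroot
    have hxα := add_ne_zero_of_isRoot_ddtQuartic hα hroot
    exact mem_filter.mpr ⟨mem_univ x, (isRoot_ddtQuartic_iff hx0 hxα).mp hroot⟩
  · simp
  · exact fun h ↦ ne_zero_of_isRoot_ddtQuartic hc0 hα
      (isRoot_of_mem_roots (Multiset.mem_toFinset.mp h)) rfl

end Quartic

section LowerBound

variable {F : Type*} [Field F]

theorem eval_ddtQuartic_sq_eq_mul [CharP F 2] {r : F} (hr : r ≠ 0) (hs : r ^ 3 + r ^ 2 + 1 ≠ 0)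
    (x : F) :
    r ^ 2 * (r ^ 3 + r ^ 2 + 1) *
      (ddtQuartic (1 + (r ^ 3 + r ^ 2 + 1)⁻¹) (r ^ 2) ((r ^ 2)⁻¹ + (r ^ 2) ^ 2)).eval x =
    (r * x ^ 2 + (r + 1) ^ 3 * x + (r + 1) * r ^ 3) *
      (r * x ^ 2 + (r ^ 2 + r + 1) * x + r ^ 3) := by
  rw [eval_ddtQuartic]
  field_simp
  grind

theorem one_add_inv_cubic_ne_zero [CharP F 2] {r : F} (hr : r ≠ 0) (hr1 : r + 1 ≠ 0) :
    1 + (r ^ 3 + r ^ 2 + 1)⁻¹ ≠ 0 := by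
  intro h
  have hs : r ^ 3 + r ^ 2 + 1 = 1 := by rw [← inv_eq_one, ← CharTwo.add_eq_zero.mp h]
  have hmul : r ^ 2 * (r + 1) = 0 := by linear_combination hs
  exact mul_ne_zero (pow_ne_zero 2 hr) hr1 hmul

variable [Fintype F] [DecidableEq F]

theorem disjoint_quadratic_roots [CharP F 2] {r : F} (hr : r ≠ 0) (hω : r ^ 2 + r + 1 ≠ 0) :
    Disjoint ({x | r * x ^ 2 + (r + 1) ^ 3 * x + (r + 1) * r ^ 3 = 0} : Finset F)
      ({x | r * x ^ 2 + (r ^ 2 + r + 1) * x + r ^ 3 = 0} : Finset F) := by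
  have two_eq_zero : (2 : F) = 0 := CharTwo.two_eq_zero
  refine disjoint_filter.mpr fun x _ h₁ h₂ ↦ ?_
  have hx : x = r := by
    have hmul : r ^ 3 * (x + r) = 0 := by
      linear_combination h₁ - h₂ - (r ^ 2 + r) * x * two_eq_zero
    exact CharTwo.add_eq_zero.mp ((mul_eq_zero.mp hmul).resolve_left (pow_ne_zero 3 hr))
  subst hx
  have hmul : x * (x ^ 2 + x + 1) = 0 := by linear_combination h₂ - x ^ 3 * two_eq_zero
  exact mul_ne_zero hr hω hmul

theorem quadratic_roots_subset_roots_ddtQuartic [CharP F 2] {r : F} (hr : r ≠ 0)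
    (hs : r ^ 3 + r ^ 2 + 1 ≠ 0) :
    ({x | r * x ^ 2 + (r + 1) ^ 3 * x + (r + 1) * r ^ 3 = 0} : Finset F) ∪
      ({x | r * x ^ 2 + (r ^ 2 + r + 1) * x + r ^ 3 = 0} : Finset F) ⊆
    (ddtQuartic (1 + (r ^ 3 + r ^ 2 + 1)⁻¹) (r ^ 2)
      ((r ^ 2)⁻¹ + (r ^ 2) ^ 2)).roots.toFinset := by
  intro x hx
  rw [Multiset.mem_toFinset, Polynomial.mem_roots (ddtQuartic_ne_zero (by simpa using hs) _ _)]
  refine (mul_eq_zero.mp ((eval_ddtQuartic_sq_eq_mul hr hs x).trans ?_)).resolve_left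
    (mul_ne_zero (pow_ne_zero 2 hr) hs)
  simpa using hx

theorem five_le_cddt_inv_add_sq {n : ℕ} (hF : Fintype.card F = 2 ^ n) {r : F} (hr : r ≠ 0)
    (hr1 : r ≠ 1) (hω : r ^ 2 + r + 1 ≠ 0) (hs : r ^ 3 + r ^ 2 + 1 ≠ 0)
    (htr₁ : Tr n (r ^ 4 / (r ^ 2 + r + 1) ^ 2) = 0) (htr₂ : Tr n (r ^ 4 / (r + 1) ^ 5) = 0) :
    5 ≤ cddt (fun x ↦ x⁻¹ + x ^ 2) (1 + (r ^ 3 + r ^ 2 + 1)⁻¹) (r ^ 2)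
      ((r ^ 2)⁻¹ + (r ^ 2) ^ 2) := by
  have : CharP F 2 := charP_of_card_eq_prime_pow hF
  have hr1' : r + 1 ≠ 0 := fun h ↦ hr1 (CharTwo.add_eq_zero.mp h)
  have two_roots₁ : 1 < #{x : F | r * x ^ 2 + (r + 1) ^ 3 * x + (r + 1) * r ^ 3 = 0} :=
    one_lt_card_quadratic_roots hF hr (pow_ne_zero 3 hr1') <| by
      rw [← htr₂]
      congr 1
      field_simp
  have two_roots₂ : 1 < #{x : F | r * x ^ 2 + (r ^ 2 + r + 1) * x + r ^ 3 = 0} :=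
    one_lt_card_quadratic_roots hF hr hω <| by rwa [← pow_succ']
  have four_roots := card_le_card (quadratic_roots_subset_roots_ddtQuartic hr hs)
  rw [card_union_of_disjoint (disjoint_quadratic_roots hr hω)] at four_roots
  have roots_lt :=
    card_roots_ddtQuartic_lt_cddt (one_add_inv_cubic_ne_zero hr hr1') (pow_ne_zero 2 hr)
  lia

end LowerBound

theorem exists_c_cdu_eq_five_odd_square_general
    {F : Type*} [Field F] [Fintype F] [DecidableEq F]
    (n : ℕ) (hF : Fintype.card F = 2 ^ n)
    (a : F) (ha0 : a ≠ 0) (ha1 : a ≠ 1) (hω : a ^ 2 + a + 1 ≠ 0) (hs : a ^ 3 + a ^ 2 + 1 ≠ 0)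
    (htr1 : Tr n (a ^ 2 / (a ^ 2 + a + 1)) = 0)
    (htr2 : Tr n (a ^ 4 / (a + 1) ^ 5) = 0)
    (G : F → F) (hG : ∀ x : F, G x = x ^ (2 ^ n - 2) + x ^ 2) :
    ∃ c : F, c ≠ 1 ∧ cdu G c = 5 ∧
      ∀ s : F, s ^ 2 = a ^ 3 + a ^ 2 + 1 → c = 1 + s⁻¹ := by
  have : CharP F 2 := charP_of_card_eq_prime_pow hF
  have two_lt_card : 2 < Fintype.card F :=
    Fintype.two_lt_card_iff.mpr ⟨a, 0, 1, ha0, ha1, zero_ne_one⟩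
  obtain rfl : G = fun x ↦ x⁻¹ + x ^ 2 :=
    funext fun x ↦ by rw [hG, ← hF, pow_card_sub_two_eq_inv two_lt_card]
  obtain ⟨r, rfl⟩ : ∃ r, r ^ 2 = a := surjective_frobenius F 2 a
  have hωr : (r ^ 2) ^ 2 + r ^ 2 + 1 = (r ^ 2 + r + 1) ^ 2 := by simp [CharTwo.add_sq]
  have hsr : (r ^ 2) ^ 3 + (r ^ 2) ^ 2 + 1 = (r ^ 3 + r ^ 2 + 1) ^ 2 := by
    simp [CharTwo.add_sq, pow_right_comm]
  have htr2r : (r ^ 2) ^ 4 / (r ^ 2 + 1) ^ 5 = (r ^ 4 / (r + 1) ^ 5) ^ 2 := by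
    rw [div_pow, pow_right_comm (r + 1), CharTwo.add_sq, one_pow, pow_right_comm r]
  rw [hωr, pow_ne_zero_iff two_ne_zero] at hω
  rw [hsr, pow_ne_zero_iff two_ne_zero] at hs
  rw [hωr, ← pow_mul] at htr1
  rw [htr2r, Tr_sq, sq_eq_zero_iff] at htr2
  have hc : 1 + (r ^ 3 + r ^ 2 + 1)⁻¹ ≠ 1 := by simpa using hs
  refine ⟨_, hc, le_antisymm ?_ ?_, fun s hsq ↦ ?_⟩
  · exact Finset.sup_le fun p _ ↦ cddt_inv_add_sq_le_five hc p.1 p.2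
  · exact (five_le_cddt_inv_add_sq hF (by simpa using ha0) (ha1 <| by simp [·]) hω hs htr1
      htr2).trans (cddt_le_cdu _ (absurd · hc) _)
  · rw [CharTwo.sq_inj.mp (hsq.trans hsr)]

theorem exists_c_cdu_eq_five_odd_square
    {F : Type*} [Field F] [Fintype F] [DecidableEq F]
    (n : ℕ) (hn : 5 ≤ n) (hnodd : Odd n)
    (hF : Fintype.card F = 2 ^ n)
    (a : F) (ha0 : a ≠ 0) (ha1 : a ≠ 1) (hs : a ^ 3 + a ^ 2 + 1 ≠ 0)
    (htr1 : Tr n (a ^ 2 / (a ^ 2 + a + 1)) = 0)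
    (htr2 : Tr n (a ^ 4 / (a + 1) ^ 5) = 0)
    (G : F → F) (hG : ∀ x : F, G x = x ^ (2 ^ n - 2) + x ^ 2) :
    ∃ c : F, c ≠ 1 ∧ cdu G c = 5 ∧
      ∀ s : F, s ^ 2 = a ^ 3 + a ^ 2 + 1 → c = 1 + s⁻¹ := by
  exact exists_c_cdu_eq_five_odd_square_general n hF a ha0 ha1
    (sq_add_self_add_one_ne_zero_of_odd hF hnodd a) hs htr1 htr2 G hG
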